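/- Let z₀, γ₀ ∈ 𝔻 and γ₁ ∈ ℂ with |γ₁| = 1. Suppose f ∈ ℋ satisfies f(z₀) = γ₀ and H¹f(z₀) = γ₁. Then f''(z₀) = c₂ and f(z) = T_{γ₀}(γ₁·T_{−z₀}(z)) for all z ∈ 𝔻. -/

import Mathlib

open Complex Metric

/-- `ℋ`: analytic self-maps of the open unit disk. -/
def Hclass (f : ℂ → ℂ) : Prop :=
  DifferentiableOn ℂ f (ball (0 : ℂ) 1) ∧ Set.MapsTo f (ball (0 : ℂ) 1) (ball (0 : ℂ) 1)

/-- The Möbius transformation `T_a(z) = (z + a)/(1 + conj(a) z)`. -/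
noncomputable def T (a z : ℂ) : ℂ := (z + a) / (1 + (starRingEnd ℂ) a * z)

/-- The (first-order) hyperbolic derivative `H¹f(z) = (1-|z|²)f'(z)/(1-|f(z)|²)`. -/
noncomputable def H1 (f : ℂ → ℂ) (z : ℂ) : ℂ :=
  ((1 - ‖z‖ ^ 2 : ℝ) : ℂ) * deriv f z / ((1 - ‖f z‖ ^ 2 : ℝ) : ℂ)

/-!
Put `g = T_{-γ₀} ∘ f ∘ T_{z₀}`, a self-map of the disk fixing `0`. The hyperbolic derivative obeys
the chain rule, and `H¹T_{z₀}(0) = H¹T_{-γ₀}(γ₀) = 1`, so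
`g'(0) = H¹g(0) = γ₁` is unimodular and the equality case of the Schwarz lemma forces
`g(w) = γ₁ w`. Undoing the Möbius maps gives `f`. The result is a linear fractional map
`(αz + β)/(cz + d)` with `c = conj(γ₀) γ₁ - conj(z₀)`, and its second derivative
`-2c(αd - βc)/(cz + d)³` at `z₀` is `c₂`.
-/

section LinearFractional

variable {𝕜 : Type*} [NontriviallyNormedField 𝕜] {c d z : 𝕜}

theorem hasDerivAt_linearFractional (a b : 𝕜) (hz : c * z + d ≠ 0) :
    HasDerivAt (fun w ↦ (a * w + b) / (c * w + d)) ((a * d - b * c) / (c * z + d) ^ 2) z := by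
  have hnum : HasDerivAt (fun w ↦ a * w + b) a z := by
    simpa using ((hasDerivAt_id z).const_mul a).add_const b
  have hden : HasDerivAt (fun w ↦ c * w + d) c z := by
    simpa using ((hasDerivAt_id z).const_mul c).add_const d
  exact (hnum.fun_div hden hz).congr_deriv (by ring)

theorem iteratedDeriv_two_linearFractional (a b : 𝕜) (hz : c * z + d ≠ 0) :
    iteratedDeriv 2 (fun w ↦ (a * w + b) / (c * w + d)) z =
      -2 * c * (a * d - b * c) / (c * z + d) ^ 3 := by
  have hden : HasDerivAt (fun w ↦ c * w + d) c z := by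
    simpa using ((hasDerivAt_id z).const_mul c).add_const d
  have hderiv : deriv (fun w ↦ (a * w + b) / (c * w + d)) =ᶠ[nhds z]
      fun w ↦ (a * d - b * c) / (c * w + d) ^ 2 := by
    filter_upwards [hden.continuousAt.eventually_ne hz] with w hw
    exact (hasDerivAt_linearFractional a b hw).deriv
  have hderiv₂ := (hasDerivAt_const z (a * d - b * c)).fun_div (hden.fun_pow 2) (pow_ne_zero 2 hz)
  rw [iteratedDeriv_succ, iteratedDeriv_one, hderiv.deriv_eq, hderiv₂.deriv]
  field_simp
  ring

end LinearFractional

section Disk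

open scoped ComplexConjugate

variable {a z : ℂ} {f g : ℂ → ℂ}

theorem ofReal_one_sub_norm_sq (a : ℂ) : ((1 - ‖a‖ ^ 2 : ℝ) : ℂ) = 1 - conj a * a := by
  rw [conj_mul']
  push_cast
  rfl

theorem one_sub_conj_mul_self_ne_zero (ha : ‖a‖ ≠ 1) : 1 - conj a * a ≠ 0 := by
  rw [← ofReal_one_sub_norm_sq, ofReal_ne_zero, sub_ne_zero, ne_comm]
  exact fun h ↦ ha ((pow_eq_one_iff_of_nonneg (norm_nonneg a) two_ne_zero).1 h)

theorem one_add_conj_mul_ne_zero (ha : ‖a‖ < 1) (hz : ‖z‖ < 1) : 1 + conj a * z ≠ 0 := by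
  intro h
  have hnorm : ‖a‖ * ‖z‖ = 1 := by
    simpa using congrArg norm (eq_neg_of_add_eq_zero_right h)
  exact (mul_lt_one_of_nonneg_of_lt_one_left (norm_nonneg a) ha hz.le).ne hnorm

theorem one_sub_norm_T_sq (h : 1 + conj a * z ≠ 0) :
    1 - ‖T a z‖ ^ 2 = (1 - ‖a‖ ^ 2) * (1 - ‖z‖ ^ 2) / ‖1 + conj a * z‖ ^ 2 := by
  have hnorm : ‖1 + conj a * z‖ ^ 2 - ‖z + a‖ ^ 2 = (1 - ‖a‖ ^ 2) * (1 - ‖z‖ ^ 2) := by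
    simp only [Complex.sq_norm, normSq_apply, add_re, add_im, mul_re, mul_im, conj_re, conj_im,
      one_re, one_im]
    ring
  rw [T, norm_div, div_pow, ← hnorm, sub_div, div_self (pow_ne_zero 2 (norm_ne_zero_iff.2 h))]

theorem norm_T_lt_one (ha : ‖a‖ < 1) (hz : ‖z‖ < 1) : ‖T a z‖ < 1 := by
  have hden := one_add_conj_mul_ne_zero ha hz
  have ha' : 0 < 1 - ‖a‖ ^ 2 := sub_pos.2 (pow_lt_one₀ (norm_nonneg a) ha two_ne_zero)
  have hz' : 0 < 1 - ‖z‖ ^ 2 := sub_pos.2 (pow_lt_one₀ (norm_nonneg z) hz two_ne_zero)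
  have hpos : 0 < 1 - ‖T a z‖ ^ 2 := by
    rw [one_sub_norm_T_sq hden]
    positivity
  exact (pow_lt_one_iff_of_nonneg (norm_nonneg _) two_ne_zero).1 (sub_pos.1 hpos)

theorem T_mul_T_neg_eq_linearFractional (b u : ℂ) (h : 1 - conj a * z ≠ 0) :
    T b (u * T (-a) z) =
      ((u - b * conj a) * z + (b - u * a)) /
        ((conj b * u - conj a) * z + (1 - conj b * u * a)) := by
  simp only [T, map_neg, neg_mul, ← sub_eq_add_neg]
  have hcancel : (z - a) / (1 - conj a * z) * (1 - conj a * z) = z - a := div_mul_cancel₀ _ h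
  rw [← mul_div_mul_right _ _ h]
  congr 1
  · linear_combination u * hcancel
  · linear_combination conj b * u * hcancel

theorem T_T_neg (ha : ‖a‖ ≠ 1) (h : 1 - conj a * z ≠ 0) : T a (T (-a) z) = z := by
  have hlinearFractional := T_mul_T_neg_eq_linearFractional a 1 h
  rw [one_mul] at hlinearFractional
  rw [hlinearFractional, div_eq_iff (by simpa using one_sub_conj_mul_self_ne_zero ha)]
  ring

theorem hasDerivAt_T (h : 1 + conj a * z ≠ 0) :
    HasDerivAt (T a) ((1 - conj a * a) / (1 + conj a * z) ^ 2) z := by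
  have hT : T a = fun w ↦ (1 * w + a) / (conj a * w + 1) := by
    funext w
    rw [T, one_mul, add_comm 1]
  rw [hT, add_comm 1]
  exact (hasDerivAt_linearFractional 1 a (add_comm 1 (conj a * z) ▸ h)).congr_deriv (by ring)

theorem hclass_T (ha : ‖a‖ < 1) : Hclass (T a) := by
  refine ⟨fun z hz ↦ ?_, fun z hz ↦ ?_⟩ <;> rw [mem_ball_zero_iff] at hz
  · exact (hasDerivAt_T (one_add_conj_mul_ne_zero ha hz)).differentiableAt.differentiableWithinAt
  · exact mem_ball_zero_iff.2 (norm_T_lt_one ha hz)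

theorem Hclass.comp (hf : Hclass f) (hg : Hclass g) : Hclass (f ∘ g) :=
  ⟨hf.1.comp hg.1 hg.2, hf.2.comp hg.2⟩

theorem Hclass.differentiableAt (hf : Hclass f) (hz : ‖z‖ < 1) :
    DifferentiableAt ℂ f z :=
  hf.1.differentiableAt (isOpen_ball.mem_nhds (mem_ball_zero_iff.2 hz))

theorem Hclass.norm_lt_one (hf : Hclass f) (hz : ‖z‖ < 1) : ‖f z‖ < 1 :=
  mem_ball_zero_iff.1 (hf.2 (mem_ball_zero_iff.2 hz))

theorem H1_comp (hf : DifferentiableAt ℂ f (g z)) (hg : DifferentiableAt ℂ g z)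
    (hgz : ‖g z‖ ≠ 1) : H1 (f ∘ g) z = H1 f (g z) * H1 g z := by
  have hne : ((1 - ‖g z‖ ^ 2 : ℝ) : ℂ) ≠ 0 := by
    rw [ofReal_one_sub_norm_sq]
    exact one_sub_conj_mul_self_ne_zero hgz
  simp only [H1, Function.comp_apply, deriv_comp z hf hg]
  field_simp

theorem H1_T (ha : ‖a‖ < 1) (hz : ‖z‖ < 1) :
    H1 (T a) z = conj (1 + conj a * z) / (1 + conj a * z) := by
  have hden := one_add_conj_mul_ne_zero ha hz
  have hden' : conj (1 + conj a * z) ≠ 0 := (map_ne_zero _).2 hden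
  have ha' := one_sub_conj_mul_self_ne_zero ha.ne
  have hz' := one_sub_conj_mul_self_ne_zero hz.ne
  rw [H1, (hasDerivAt_T hden).deriv, one_sub_norm_T_sq hden, ofReal_div, ofReal_mul, ofReal_pow,
    ← conj_mul', ofReal_one_sub_norm_sq, ofReal_one_sub_norm_sq]
  generalize conj (1 + conj a * z) = q at hden'
  field_simp

theorem H1_T_zero (ha : ‖a‖ < 1) : H1 (T a) 0 = 1 := by
  simp [H1_T ha]

theorem H1_T_neg_self (ha : ‖a‖ < 1) : H1 (T (-a)) a = 1 := by
  rw [H1_T (by rwa [norm_neg]) ha, map_neg, neg_mul, ← sub_eq_add_neg]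
  simp only [map_sub, map_one, map_mul, conj_conj]
  rw [mul_comm a, div_self (one_sub_conj_mul_self_ne_zero ha.ne)]

theorem H1_eq_deriv_of_apply_zero_eq_zero (hf : f 0 = 0) : H1 f 0 = deriv f 0 := by
  simp [H1, hf]

theorem Hclass.eqOn_deriv_mul_of_norm_deriv_eq_one (hf : Hclass f) (hf₀ : f 0 = 0)
    (hderiv : ‖deriv f 0‖ = 1) : Set.EqOn f (fun z ↦ deriv f 0 * z) (ball 0 1) := by
  have hmaps : Set.MapsTo f (ball 0 1) (closedBall (f 0) 1) := by
    rw [hf₀]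
    exact hf.2.mono_right ball_subset_closedBall
  have haffine := affine_of_mapsTo_ball_of_norm_dslope_eq_div hf.1 hmaps
    (mem_ball_self one_pos) (by rw [dslope_same, hderiv, div_one])
  simpa only [hf₀, dslope_same, sub_zero, zero_add, smul_eq_mul, mul_comm] using haffine

theorem Hclass.H1_T_neg_comp_comp_T (hf : Hclass f) (hz : ‖z‖ < 1) :
    H1 (T (-f z) ∘ f ∘ T z) 0 = H1 f z := by
  have hfz := hf.norm_lt_one hz
  have hfz' : ‖-f z‖ < 1 := by rwa [norm_neg]
  have hzero : ‖(0 : ℂ)‖ < 1 := by simp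
  have hT : T z 0 = z := by simp [T]
  have hfT : (f ∘ T z) 0 = f z := congrArg f hT
  have hf' : DifferentiableAt ℂ f (T z 0) := hT.symm ▸ hf.differentiableAt hz
  have hT' := (hclass_T hz).differentiableAt hzero
  rw [H1_comp ((hclass_T hfz').differentiableAt (hfT ▸ hfz)) (hf'.comp 0 hT') (hfT ▸ hfz.ne),
    H1_comp hf' hT' (hT.symm ▸ hz.ne), hfT, hT, H1_T_zero hz,
    H1_T_neg_self hfz, one_mul, mul_one]

theorem Hclass.eqOn_T_mul_T_neg_of_norm_H1_eq_one (hf : Hclass f) (ha : ‖a‖ < 1)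
    (hH1 : ‖H1 f a‖ = 1) :
    Set.EqOn f (fun z ↦ T (f a) (H1 f a * T (-a) z)) (ball 0 1) := by
  have hfa := hf.norm_lt_one ha
  have hneg : ∀ {w : ℂ}, ‖w‖ < 1 → ‖-w‖ < 1 := fun hw ↦ by rwa [norm_neg]
  have hcancel : ∀ {b w : ℂ}, ‖b‖ < 1 → ‖w‖ < 1 → T b (T (-b) w) = w := fun hb hw ↦
    T_T_neg hb.ne (by simpa [sub_eq_add_neg] using one_add_conj_mul_ne_zero (hneg hb) hw)
  have hg : Hclass (T (-f a) ∘ f ∘ T a) := (hclass_T (hneg hfa)).comp (hf.comp (hclass_T ha))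
  have hg₀ : (T (-f a) ∘ f ∘ T a) 0 = 0 := by simp [T]
  have hderiv : deriv (T (-f a) ∘ f ∘ T a) 0 = H1 f a := by
    rw [← H1_eq_deriv_of_apply_zero_eq_zero hg₀, hf.H1_T_neg_comp_comp_T ha]
  have hlinear := hg.eqOn_deriv_mul_of_norm_deriv_eq_one hg₀ (hderiv.symm ▸ hH1)
  intro z hz
  have hz' := mem_ball_zero_iff.1 hz
  have hgz : T (-f a) (f z) = H1 f a * T (-a) z := by
    simpa only [hderiv, Function.comp_apply, hcancel ha hz'] using
      hlinear ((hclass_T (hneg ha)).2 hz)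
  exact (hcancel hfa (hf.norm_lt_one hz')).symm.trans (congrArg (T (f a)) hgz)

theorem iteratedDeriv_two_T_mul_T_neg (b u : ℂ) (ha : ‖a‖ ≠ 1) :
    iteratedDeriv 2 (fun z ↦ T b (u * T (-a) z)) a =
      2 * ((1 - ‖b‖ ^ 2 : ℝ) : ℂ) / ((1 - ‖a‖ ^ 2 : ℝ) : ℂ) ^ 2 * (conj a - conj b * u) * u := by
  have ha' := one_sub_conj_mul_self_ne_zero ha
  have hlinearFractional := ((by fun_prop : ContinuousAt (fun z ↦ 1 - conj a * z) a).eventually_ne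
    ha').mono fun z hz ↦ T_mul_T_neg_eq_linearFractional b u hz
  have hden : (conj b * u - conj a) * a + (1 - conj b * u * a) = 1 - conj a * a := by ring
  have hdet : (u - b * conj a) * (1 - conj b * u * a) - (b - u * a) * (conj b * u - conj a) =
      u * (1 - conj a * a) * (1 - conj b * b) := by ring
  rw [Filter.EventuallyEq.iteratedDeriv_eq 2 hlinearFractional,
    iteratedDeriv_two_linearFractional _ _ (hden ▸ ha'), hden, hdet, ofReal_one_sub_norm_sq,
    ofReal_one_sub_norm_sq]
  field_simp
  ring

end Disk

/-- Boundary case of the Schwarz-Pick Lemma of second derivative: if `|γ₁| = 1` then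
`f''(z₀) = c₂` and `f(z) = T_{γ₀}(γ₁ T_{-z₀}(z))`. -/
theorem schwarz_pick_second_boundary (z₀ γ₀ γ₁ : ℂ)
    (hz₀ : z₀ ∈ ball (0 : ℂ) 1) (hγ₀ : γ₀ ∈ ball (0 : ℂ) 1) (hγ₁ : ‖γ₁‖ = 1)
    (f : ℂ → ℂ) (hf : Hclass f) (hfz₀ : f z₀ = γ₀) (hH1 : H1 f z₀ = γ₁) :
    iteratedDeriv 2 f z₀ =
      2 * ((1 - ‖γ₀‖ ^ 2 : ℝ) : ℂ) / ((1 - ‖z₀‖ ^ 2 : ℝ) : ℂ) ^ 2 *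
        ((starRingEnd ℂ) z₀ - (starRingEnd ℂ) γ₀ * γ₁) * γ₁ ∧
      ∀ z ∈ ball (0 : ℂ) 1, f z = T γ₀ (γ₁ * T (-z₀) z) := by
  obtain rfl := hfz₀
  obtain rfl := hH1
  have hz₀' : ‖z₀‖ < 1 := mem_ball_zero_iff.1 hz₀
  have hrep := hf.eqOn_T_mul_T_neg_of_norm_H1_eq_one hz₀' hγ₁
  refine ⟨?_, hrep⟩
  rw [(hrep.eventuallyEq_of_mem (isOpen_ball.mem_nhds hz₀)).iteratedDeriv_eq 2]
  exact iteratedDeriv_two_T_mul_T_neg (f z₀) (H1 f z₀) hz₀'.ne
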